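/- Let A and B be separable C*-algebras and let φ = (φ_t)_{t∈[1,∞)} : A → B be an asymptotic homomorphism. Then there exists an asymptotic homomorphism φ' = (φ'_t)_{t∈[1,∞)} : A → B which is equivalent to φ, i.e. lim_{t→∞} ‖φ_t(a) − φ'_t(a)‖ = 0 for all a ∈ A, and which is equicontinuous: for every a ∈ A and every ε > 0 there exists δ > 0 such that for all t ∈ [1,∞) and all b ∈ A with ‖a − b‖ < δ one has ‖φ'_t(a) − φ'_t(b)‖ < ε. -/

import Mathlib

open Filter Set

/-- An asymptotic homomorphism from `A` to `B`: a family `φ = (φ_t)_{t ∈ [1,∞)}` of maps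
`A → B` such that `t ↦ φ_t(a)` is continuous on `[1,∞)` for every `a`, and which is
asymptotically star-preserving, linear and multiplicative as `t → ∞`. -/
def IsAsymptoticHom {A B : Type*} [NonUnitalNormedRing A] [StarRing A] [Module ℂ A]
    [NonUnitalNormedRing B] [StarRing B] [Module ℂ B] (φ : ℝ → A → B) : Prop :=
  (∀ a : A, ContinuousOn (fun t => φ t a) (Ici 1)) ∧
  (∀ a : A, Tendsto (fun t => ‖φ t (star a) - star (φ t a)‖) atTop (nhds 0)) ∧
  (∀ (a b : A) (c : ℂ),
    Tendsto (fun t => ‖φ t (c • a + b) - c • φ t a - φ t b‖) atTop (nhds 0)) ∧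
  (∀ a b : A, Tendsto (fun t => ‖φ t (a * b) - φ t a * φ t b‖) atTop (nhds 0))

/-- Algebraic estimate in a C*-algebra. -/
theorem aux_norm {B : Type*} [NonUnitalCStarAlgebra B] (x y z : B)
    (h1 : ‖y * x + z * z - (z + z)‖ ≤ 1/100) (h2 : ‖y - star x‖ ≤ 1/100)
    (h3 : ‖z - star z‖ ≤ 1/100) : ‖x‖ ≤ 3 := by
  let : PartialOrder B := CStarAlgebra.spectralOrder B
  have : StarOrderedRing B := CStarAlgebra.spectralOrderedRing B
  have hR : ‖star x * x + star z * z‖ ≤ 1/100 + (2 + 1/100) * ‖z‖ + 1/100 * ‖x‖ := by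
    have e : star x * x + star z * z = (y * x + z * z - (z + z)) + (z + z)
        - (y - star x) * x - (z - star z) * z := by
      simp only [sub_mul]; abel
    rw [e]
    have i1 := norm_mul_le (y - star x) x
    have i2 := norm_mul_le (z - star z) z
    have i3 := norm_sub_le ((y * x + z * z - (z + z)) + (z + z)
        - (y - star x) * x) ((z - star z) * z)
    have i4 := norm_sub_le ((y * x + z * z - (z + z)) + (z + z)) ((y - star x) * x)
    have i5 := norm_add_le (y * x + z * z - (z + z)) (z + z)
    have i6 := norm_add_le z z
    have i7 : ‖y - star x‖ * ‖x‖ ≤ 1/100 * ‖x‖ := by gcongr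
    have i8 : ‖z - star z‖ * ‖z‖ ≤ 1/100 * ‖z‖ := by gcongr
    linarith
  have hx : ‖x‖ * ‖x‖ ≤ ‖star x * x + star z * z‖ := by
    rw [← CStarRing.norm_star_mul_self]
    exact CStarAlgebra.norm_le_norm_of_nonneg_of_le (star_mul_self_nonneg x)
      (le_add_of_nonneg_right (star_mul_self_nonneg z))
  have hz : ‖z‖ * ‖z‖ ≤ ‖star x * x + star z * z‖ := by
    rw [← CStarRing.norm_star_mul_self]
    exact CStarAlgebra.norm_le_norm_of_nonneg_of_le (star_mul_self_nonneg z)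
      (le_add_of_nonneg_left (star_mul_self_nonneg x))
  by_contra! h
  rcases le_total ‖z‖ ‖x‖ with h' | h' <;> nlinarith

/-- A self-adjoint `c` with `2c - c² = a* a` for `‖a‖ ≤ 1`. -/
theorem aux_cfc {A : Type*} [NonUnitalCStarAlgebra A] (a : A) (ha : ‖a‖ ≤ 1) :
    ∃ c : A, star c = c ∧ star a * a + c * c = c + c := by
  let : PartialOrder A := CStarAlgebra.spectralOrder A
  have : StarOrderedRing A := CStarAlgebra.spectralOrderedRing A
  have hsa : IsSelfAdjoint (star a * a) := IsSelfAdjoint.star_mul_self a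
  set f : ℝ → ℝ := fun x => 1 - Real.sqrt (1 - x) with hf
  have hfc : Continuous f := by fun_prop
  have hf0 : f 0 = 0 := by simp [hf]
  refine ⟨cfcₙ f (star a * a), ?_, ?_⟩
  · exact (cfcₙ_predicate f (star a * a)).star_eq
  · have hn : ‖star a * a‖ ≤ 1 := by
      rw [CStarRing.norm_star_mul_self]; nlinarith [norm_nonneg a]
    conv_lhs =>
      arg 1
      rw [← cfcₙ_id' ℝ (star a * a)]
    rw [← cfcₙ_mul f f (star a * a) hfc.continuousOn hf0 hfc.continuousOn hf0,
      ← cfcₙ_add (fun x : ℝ => x) (fun x => f x * f x) (star a * a) continuousOn_id rfl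
        (hfc.mul hfc).continuousOn (by simp [hf0]),
      ← cfcₙ_add f f (star a * a) hfc.continuousOn hf0 hfc.continuousOn hf0]
    refine cfcₙ_congr fun x hx => ?_
    have hx1 : x ≤ 1 := by
      have := NonUnitalIsometricContinuousFunctionalCalculus.norm_quasispectrum_le (𝕜 := ℝ)
        (star a * a) hx hsa
      exact (le_abs_self x).trans (this.trans hn)
    have := Real.mul_self_sqrt (sub_nonneg.2 hx1)
    simp only [hf]
    nlinarith

section
variable {A B : Type*} [NonUnitalCStarAlgebra A] [NonUnitalCStarAlgebra B]
  {φ : ℝ → A → B}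

theorem aux_star (hφ : IsAsymptoticHom φ) (a : A) :
    Tendsto (fun t => φ t (star a) - star (φ t a)) atTop (nhds 0) :=
  tendsto_zero_iff_norm_tendsto_zero.2 (hφ.2.1 a)

theorem aux_lin (hφ : IsAsymptoticHom φ) (a b : A) (c : ℂ) :
    Tendsto (fun t => φ t (c • a + b) - c • φ t a - φ t b) atTop (nhds 0) :=
  tendsto_zero_iff_norm_tendsto_zero.2 (hφ.2.2.1 a b c)

theorem aux_mul (hφ : IsAsymptoticHom φ) (a b : A) :
    Tendsto (fun t => φ t (a * b) - φ t a * φ t b) atTop (nhds 0) :=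
  tendsto_zero_iff_norm_tendsto_zero.2 (hφ.2.2.2 a b)

theorem aux_zero (hφ : IsAsymptoticHom φ) : Tendsto (fun t => φ t 0) atTop (nhds 0) := by
  simpa using (aux_lin hφ 0 0 1).neg

theorem aux_small {f : ℝ → B} (h : Tendsto f atTop (nhds 0)) {ε : ℝ} (hε : 0 < ε) :
    ∀ᶠ t in atTop, ‖f t‖ ≤ ε := by
  have := (tendsto_zero_iff_norm_tendsto_zero.1 h).eventually (ge_mem_nhds hε)
  exact this

theorem aux_bound1 (hφ : IsAsymptoticHom φ) (a : A) (ha : ‖a‖ ≤ 1) :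
    ∀ᶠ t in atTop, ‖φ t a‖ ≤ 3 := by
  obtain ⟨c, hc, hac⟩ := aux_cfc a ha
  have h1 : Tendsto (fun t => φ t (star a) * φ t a + φ t c * φ t c - (φ t c + φ t c))
      atTop (nhds 0) := by
    have e1 := aux_lin hφ (star a * a) (c * c) 1
    have e2 := aux_lin hφ c c 1
    have e3 := aux_mul hφ (star a) a
    have e4 := aux_mul hφ c c
    simp only [one_smul] at e1 e2
    rw [hac] at e1
    have := ((e2.sub e1).sub e3).sub e4
    simp only [sub_zero] at this
    refine this.congr fun t => ?_
    abel
  have h3 := aux_star hφ c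
  rw [hc] at h3
  filter_upwards [aux_small h1 (ε := 1/100) (by norm_num),
    aux_small (aux_star hφ a) (ε := 1/100) (by norm_num),
    aux_small h3 (ε := 1/100) (by norm_num)] with t i1 i2 i3
  exact aux_norm _ _ _ i1 i2 i3

theorem aux_bound (hφ : IsAsymptoticHom φ) (a : A) {ε : ℝ} (hε : 0 < ε) :
    ∀ᶠ t in atTop, ‖φ t a‖ ≤ 3 * ‖a‖ + ε := by
  by_cases ha : a = 0
  · subst ha
    simpa using aux_small (aux_zero hφ) hε
  · have hn : ‖a‖ ≠ 0 := norm_ne_zero_iff.2 ha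
    set b : A := ((‖a‖ : ℂ)⁻¹) • a with hb
    have hba : (‖a‖ : ℂ) • b + 0 = a := by
      rw [hb, smul_smul, mul_inv_cancel₀ (by exact_mod_cast hn), one_smul, add_zero]
    have hbn : ‖b‖ ≤ 1 := by
      rw [hb, norm_smul]; simp [hn]
    have e1 := aux_lin hφ b 0 (‖a‖ : ℂ)
    rw [hba] at e1
    have e2 := e1.add (aux_zero hφ)
    rw [add_zero] at e2
    filter_upwards [aux_small e2 hε, aux_bound1 hφ b hbn] with t h1 h2
    have : φ t a = (φ t a - (‖a‖ : ℂ) • φ t b - φ t 0 + φ t 0) + (‖a‖ : ℂ) • φ t b := by abel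
    rw [this]
    refine (norm_add_le _ _).trans ?_
    have h3 : ‖(‖a‖ : ℂ) • φ t b‖ ≤ 3 * ‖a‖ := by
      rw [norm_smul]; simp only [Complex.norm_real, norm_norm]
      nlinarith [norm_nonneg a]
    linarith

theorem aux_diff (hφ : IsAsymptoticHom φ) (a b : A) {ε : ℝ} (hε : 0 < ε) :
    ∀ᶠ t in atTop, ‖φ t a - φ t b‖ ≤ 3 * ‖a - b‖ + ε := by
  have e := aux_lin hφ b a (-1)
  have hab : (-1 : ℂ) • b + a = a - b := by rw [neg_one_smul]; abel
  rw [hab] at e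
  filter_upwards [aux_small e (half_pos hε), aux_bound hφ (a - b) (half_pos hε)] with t h1 h2
  have : φ t a - φ t b = φ t (a - b) - (φ t (a - b) - (-1 : ℂ) • φ t b - φ t a) := by
    rw [neg_one_smul]; abel
  rw [this]
  refine (norm_sub_le _ _).trans ?_
  linarith

/-- The equicontinuous replacement, before checking the axioms. -/
theorem aux_main [TopologicalSpace.SeparableSpace A] (hφ : IsAsymptoticHom φ) :
    ∃ ψ : ℝ × A → B, Continuous ψ ∧ ∀ a : A, ∀ ε > (0:ℝ), ∃ δ > (0:ℝ), ∃ T : ℝ,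
      ∀ t ≥ T, ∀ b : A, ‖a - b‖ < δ → ‖φ t a - ψ (t, b)‖ ≤ ε := by
  set d : ℕ → A := fun n => TopologicalSpace.denseSeq A (Nat.unpair n).1 with hd
  have hT : ∀ n : ℕ, ∃ T : ℝ, (n : ℝ) + 1 ≤ T ∧ ∀ t ≥ T, ∀ m ∈ Finset.range (n + 1),
      ‖φ t (d m) - φ t (d n)‖ ≤ 3 * ‖d m - d n‖ + 1 / ((n : ℝ) + 1) := by
    intro n
    have : ∀ᶠ t in atTop, ∀ m ∈ Finset.range (n + 1),
        ‖φ t (d m) - φ t (d n)‖ ≤ 3 * ‖d m - d n‖ + 1 / ((n : ℝ) + 1) :=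
      (Finset.eventually_all _).2 fun m _ => aux_diff hφ _ _ (by positivity)
    obtain ⟨T, hT⟩ := eventually_atTop.1 this
    exact ⟨max T (n + 1), le_max_right _ _, fun t ht => hT t (le_trans (le_max_left _ _) ht)⟩
  choose T hTn hT using hT
  have hcont : ∀ a, Continuous fun t : ℝ => φ (max t 1) a := fun a =>
    (hφ.1 a).comp_continuous (by fun_prop) fun t => Set.mem_Ici.2 (le_max_right _ _)
  have hpair : ∀ s m n, T m ≤ s → T n ≤ s →
      ‖φ s (d m) - φ s (d n)‖ ≤ 3 * ‖d m - d n‖ + 1 / ((n : ℝ) + 1) := by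
    intro s m n hm hn
    rcases le_total m n with h | h
    · exact hT n s hn m (Finset.mem_range.2 (by omega))
    · have := hT m s hm n (Finset.mem_range.2 (by omega))
      rw [norm_sub_rev, norm_sub_rev (d m)]
      refine this.trans ?_
      gcongr
  let S : ℝ × A → Set B := fun p => {v | ∀ n, T n ≤ p.1 →
    ‖v - φ (max p.1 1) (d n)‖ < 6 * ‖p.2 - d n‖ + 2 / ((n : ℝ) + 1)}
  have hconv : ∀ p, Convex ℝ (S p) := by
    intro p
    have : S p = ⋂ n, ⋂ (_ : T n ≤ p.1), Metric.ball (φ (max p.1 1) (d n))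
        (6 * ‖p.2 - d n‖ + 2 / ((n : ℝ) + 1)) := by
      ext v; simp [S, dist_eq_norm]
    rw [this]
    exact convex_iInter fun n => convex_iInter fun _ => convex_ball _ _
  have hloc : ∀ p : ℝ × A, ∃ U ∈ nhds p, ∃ c : ℝ × A → B, ContinuousOn c U ∧
      ∀ q ∈ U, c q ∈ S q := by
    rintro ⟨s, b⟩
    -- a suitable continuous function of s
    have key : ∃ c : ℝ × A → B, Continuous c ∧ c (s, b) ∈ S (s, b) := by
      by_cases hne : ∃ n, T n ≤ s
      · have hfin : {n | T n ≤ s}.Finite := by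
          refine (Set.finite_Iic ⌊s⌋₊).subset fun n hn => ?_
          have := hTn n
          exact Nat.le_floor (by simp only [mem_ofPred_eq] at hn; linarith)
        obtain ⟨m, hm, hmin⟩ := Set.exists_min_image _ (fun n => ‖b - d n‖) hfin hne
        refine ⟨fun q => φ (max q.1 1) (d m), (hcont _).comp continuous_fst, fun n hn => ?_⟩
        simp only at hn ⊢
        have hs : max s 1 = s := max_eq_left (by
          have := hTn n
          have : (0:ℝ) ≤ n := n.cast_nonneg
          linarith)
        rw [hs]
        have h1 := hpair s m n hm hn
        have h2 := hmin n hn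
        have h3 : ‖d m - d n‖ ≤ ‖b - d m‖ + ‖b - d n‖ := by
          rw [norm_sub_rev b (d m)]
          simpa using norm_add_le (d m - b) (b - d n)
        have h4 : (0:ℝ) < 1 / ((n : ℝ) + 1) := by positivity
        have h5 : 2 / ((n : ℝ) + 1) = 2 * (1 / ((n : ℝ) + 1)) := by ring
        linarith
      · push Not at hne
        exact ⟨fun _ => 0, continuous_const, fun n hn => absurd hn (not_le.2 (hne n))⟩
    obtain ⟨c, hc, hcS⟩ := key
    have hev : ∀ᶠ q : ℝ × A in nhds (s, b), ∀ n ∈ Finset.range (⌊s + 1⌋₊ + 1), T n ≤ q.1 →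
        ‖c q - φ (max q.1 1) (d n)‖ < 6 * ‖q.2 - d n‖ + 2 / ((n : ℝ) + 1) := by
      refine (Finset.eventually_all _).2 fun n _ => ?_
      by_cases hn : T n ≤ s
      · have hl : Continuous fun q : ℝ × A => ‖c q - φ (max q.1 1) (d n)‖ :=
          (hc.sub ((hcont (d n)).comp continuous_fst)).norm
        have hr : Continuous fun q : ℝ × A => 6 * ‖q.2 - d n‖ + 2 / ((n : ℝ) + 1) := by
          fun_prop
        filter_upwards [hl.continuousAt.eventually_lt hr.continuousAt (hcS n hn)] with q hq _
        exact hq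
      · have : ∀ᶠ q : ℝ × A in nhds (s, b), q.1 < T n :=
          continuous_fst.continuousAt.eventually_lt continuousAt_const (not_le.1 hn)
        filter_upwards [this] with q hq h
        exact absurd h (not_le.2 hq)
    have hev2 : ∀ᶠ q : ℝ × A in nhds (s, b), q.1 < s + 1 :=
      continuous_fst.continuousAt.eventually_lt continuousAt_const (by simp)
    refine ⟨_, hev.and hev2, c, hc.continuousOn, ?_⟩
    rintro q ⟨hq1, hq2⟩ n hn
    refine hq1 n (Finset.mem_range.2 (Nat.lt_succ_of_le (Nat.le_floor ?_))) hn
    have := hTn n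
    linarith
  obtain ⟨g, hg⟩ := exists_continuous_forall_mem_convex_of_local hconv hloc
  refine ⟨g, g.continuous, fun a ε hε => ?_⟩
  obtain ⟨i, hi⟩ := (TopologicalSpace.denseRange_denseSeq A).exists_dist_lt a
    (show (0:ℝ) < ε / 20 by positivity)
  obtain ⟨j, hj⟩ := exists_nat_one_div_lt (show (0:ℝ) < ε / 40 by positivity)
  set n := Nat.pair i j with hn
  have hdn : ‖a - d n‖ < ε / 20 := by
    simpa [hd, hn, dist_eq_norm] using hi
  have hnn : 2 / ((n : ℝ) + 1) < ε / 20 := by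
    have : (j : ℝ) ≤ n := by exact_mod_cast Nat.right_le_pair i j
    have h2 : 1 / ((n : ℝ) + 1) ≤ 1 / ((j : ℝ) + 1) := by gcongr
    have h5 : 2 / ((n : ℝ) + 1) = 2 * (1 / ((n : ℝ) + 1)) := by ring
    linarith
  obtain ⟨T', hT'⟩ := eventually_atTop.1 (aux_diff hφ a (d n) (show (0:ℝ) < ε / 20 by positivity))
  refine ⟨ε / 20, by positivity, max (T n) T', fun t ht b hb => ?_⟩
  have ht1 : T n ≤ t := (le_max_left _ _).trans ht
  have ht2 := hT' t ((le_max_right _ _).trans ht)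
  have hs : max t 1 = t := max_eq_left (by
    have := hTn n
    have : (0:ℝ) ≤ n := n.cast_nonneg
    linarith)
  have h1 := hg (t, b) n ht1
  simp only [hs] at h1
  have h3 : ‖b - d n‖ ≤ ‖a - b‖ + ‖a - d n‖ := by
    rw [norm_sub_rev a b]
    simpa using norm_add_le (b - a) (a - d n)
  have h4 : ‖φ t a - g (t, b)‖ ≤ ‖φ t a - φ t (d n)‖ + ‖g (t, b) - φ t (d n)‖ := by
    rw [norm_sub_rev (g (t, b))]
    simpa using norm_add_le (φ t a - φ t (d n)) (φ t (d n) - g (t, b))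
  linarith

theorem aux_equiv (hφ : IsAsymptoticHom φ) {ψ : ℝ → A → B}
    (hc : ∀ a, Continuous fun t => ψ t a)
    (h : ∀ a, Tendsto (fun t => φ t a - ψ t a) atTop (nhds 0)) : IsAsymptoticHom ψ := by
  refine ⟨fun a => (hc a).continuousOn, fun a => ?_, fun a b c => ?_, fun a b => ?_⟩ <;>
    refine tendsto_zero_iff_norm_tendsto_zero.1 ?_
  · have := ((aux_star hφ a).sub (h (star a))).add ((h a).star)
    simp only [star_zero, sub_zero, add_zero] at this
    refine this.congr fun t => ?_
    rw [star_sub]; abel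
  · have := (((aux_lin hφ a b c).sub (h (c • a + b))).add ((h a).const_smul c)).add (h b)
    simp only [smul_zero, sub_zero, add_zero] at this
    refine this.congr fun t => ?_
    rw [smul_sub]; abel
  · have hb : ∀ a, IsBoundedUnder (· ≤ ·) atTop (norm ∘ fun t => φ t a) := fun a =>
      ⟨_, eventually_map.2 (aux_bound hφ a one_pos)⟩
    have e1 : Tendsto (fun t => φ t a * (φ t b - ψ t b)) atTop (nhds 0) :=
      isBoundedUnder_le_mul_tendsto_zero (hb a) (h b)
    have e2 : Tendsto (fun t => (φ t a - ψ t a) * φ t b) atTop (nhds 0) :=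
      (h a).zero_mul_isBoundedUnder_le (hb b)
    have e3 := (h a).mul (h b)
    have := ((((aux_mul hφ a b).sub (h (a * b))).add e1).add e2).sub e3
    simp only [mul_zero, sub_zero, add_zero] at this
    refine this.congr fun t => ?_
    simp only [mul_sub, sub_mul]; abel

end

/-- Every asymptotic homomorphism `φ : A → B` between separable C*-algebras is
equivalent to an equicontinuous asymptotic homomorphism `φ' : A → B`. -/
theorem stmt_6 {A B : Type*} [NonUnitalCStarAlgebra A] [TopologicalSpace.SeparableSpace A]
    [NonUnitalCStarAlgebra B] [TopologicalSpace.SeparableSpace B]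
    (φ : ℝ → A → B) (hφ : IsAsymptoticHom φ) :
    ∃ φ' : ℝ → A → B, IsAsymptoticHom φ' ∧
      (∀ a : A, Tendsto (fun t => ‖φ t a - φ' t a‖) atTop (nhds 0)) ∧
      (∀ a : A, ∀ ε > (0:ℝ), ∃ δ > (0:ℝ), ∀ t ∈ Ici (1:ℝ), ∀ b : A,
        ‖a - b‖ < δ → ‖φ' t a - φ' t b‖ < ε) := by
  obtain ⟨ψ, hψ, hlim⟩ := aux_main hφ
  have heq : ∀ a, Tendsto (fun t => φ t a - ψ (t, a)) atTop (nhds 0) := by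
    intro a
    refine Metric.tendsto_nhds.2 fun ε hε => ?_
    obtain ⟨δ, hδ, T, hT⟩ := hlim a (ε / 2) (by positivity)
    filter_upwards [eventually_ge_atTop T] with t ht
    have := hT t ht a (by simpa using hδ)
    rw [dist_zero_right]
    linarith
  refine ⟨fun t a => ψ (t, a), aux_equiv hφ (fun a => by fun_prop) heq,
    fun a => tendsto_zero_iff_norm_tendsto_zero.1 (heq a), fun a ε hε => ?_⟩
  obtain ⟨δ, hδ, T, hT⟩ := hlim a (ε / 3) (by positivity)
  have hK : ∀ᶠ b in nhds a, ∀ t ∈ Icc 1 T, ‖ψ (t, a) - ψ (t, b)‖ < ε := by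
    refine isCompact_Icc.eventually_forall_of_forall_eventually fun t _ => ?_
    have hl : Continuous fun q : A × ℝ => ‖ψ (q.2, a) - ψ (q.2, q.1)‖ := by fun_prop
    exact hl.continuousAt.eventually_lt continuousAt_const (by simpa using hε)
  obtain ⟨δ', hδ', hK⟩ := Metric.eventually_nhds_iff.1 hK
  refine ⟨min δ δ', lt_min hδ hδ', fun t ht b hb => ?_⟩
  rcases le_total t T with h | h
  · refine hK ?_ t ⟨ht, h⟩
    rw [dist_comm, dist_eq_norm]
    exact hb.trans_le (min_le_right _ _)
  · have h1 := hT t h a (by simpa using hδ)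
    have h2 := hT t h b (hb.trans_le (min_le_left _ _))
    have h3 : ‖ψ (t, a) - ψ (t, b)‖ ≤ ‖φ t a - ψ (t, a)‖ + ‖φ t a - ψ (t, b)‖ := by
      rw [norm_sub_rev (φ t a) (ψ (t, a))]
      simpa using norm_add_le (ψ (t, a) - φ t a) (φ t a - ψ (t, b))
    show ‖ψ (t, a) - ψ (t, b)‖ < ε
    linarith
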